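/- arXiv:2509.21547 — 3 statements merged into one kernel-verified Lean document; each statement's English description precedes it below -/
import Mathlib

section
/- Let S = S_1 ∪ ⋯ ∪ S_T be an i.i.d. sample of size n split into T non-overlapping subsamples, and let U^train_t = ∪_{s=1}^t S_s. Let π_0*, π_1*, …, π_T* be a sequence of distributions on H, where π_t* may depend on U^train_t but not on the rest of the data, and let γ_2, …, γ_T be coefficients where γ_t may depend on U^train_{t−1} but not on the rest of the data. For t ∈ {1,…,T} let P_t be a set of distributions on H that may depend on U^train_t. Let δ ∈ (0,1). Suppose there is a function B_1(π_1) with P[∃ π_1 ∈ P_1 : E_{π_1}[L(h)] ≥ B_1(π_1)] ≤ δ/T, and for each t ≥ 2 a function E_t(π_t, γ_t) with P[∃ π_t ∈ P_t : E_{π_t}[L(h) − γ_t E_{π_{t−1}*}[L(h')]] ≥ E_t(π_t, γ_t)] ≤ δ/T. Define recursively B_t(π_t) = E_t(π_t, γ_t) + γ_t B_{t−1}(π_{t−1}*). Then P[∃ t ∈ {1,…,T} and π_t ∈ P_t : E_{π_t}[L(h)] ≥ B_t(π_t)] ≤ δ. -/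
open MeasureTheory ProbabilityTheory

/-!
Fix an outcome `ω` outside all the stage failure events. If `E_{π*}[L] < B_{t-1}(π*)` for
`π* = π_{t-1}*`, then, as `γ_t ≥ 0`, adding `γ_t B_{t-1}(π*)` to the stage-`t` bound on
`E_π[L] - γ_t E_{π*}[L]` gives `E_π[L] < B_t(π)`; the comparator `π_t*` is itself a member of the
class `P_t`, so the induction continues. Hence the bound can only fail on the union of the `T`
stage failures.
-/

section RecursiveBound

variable {ι R : Type*} [Ring R]

theorem lt_add_mul_of_sub_mul_lt [PartialOrder R] [IsOrderedRing R] {a c e x y : R}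
    (hc : 0 ≤ c) (hxy : x ≤ y) (h : a - c * x < e) : a < e + c * y :=
  calc
    a < e + c * x := sub_lt_iff_lt_add.mp h
    _ ≤ e + c * y := by gcongr

theorem risk_lt_recursive_bound [PartialOrder R] [IsOrderedRing R] {T : ℕ}
    {P : ℕ → Set ι} {πstar : ℕ → ι} {γ : ℕ → R} {risk : ι → R} {E B : ℕ → ι → R}
    (hmem : ∀ t, 1 ≤ t → t < T → πstar t ∈ P t)
    (hγ : ∀ t, 2 ≤ t → t ≤ T → 0 ≤ γ t)
    (hrec : ∀ t, 2 ≤ t → t ≤ T → ∀ π ∈ P t,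
      B t π = E t π + γ t * B (t - 1) (πstar (t - 1)))
    (hbase : ∀ π ∈ P 1, risk π < B 1 π)
    (hstep : ∀ t, 2 ≤ t → t ≤ T → ∀ π ∈ P t,
      risk π - γ t * risk (πstar (t - 1)) < E t π)
    {t : ℕ} (ht : 1 ≤ t) (htT : t ≤ T) : ∀ π ∈ P t, risk π < B t π := by
  induction t, ht using Nat.le_induction with
  | base => exact hbase
  | succ t ht ih =>
    intro π hπ
    have two_le : 2 ≤ t + 1 := by omega
    have comparator_lt : risk (πstar t) < B t (πstar t) :=
      ih (by omega) (πstar t) (hmem t ht htT)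
    rw [hrec (t + 1) two_le htT π hπ]
    exact lt_add_mul_of_sub_mul_lt (hγ (t + 1) two_le htT) comparator_lt.le
      (hstep (t + 1) two_le htT π hπ)

variable [LinearOrder R] [IsOrderedRing R] {Ω : Type*} {T : ℕ}
  {P : ℕ → Ω → Set ι} {πstar : ℕ → Ω → ι} {γ : ℕ → Ω → R}
  {risk : ι → Ω → R} {E B : ℕ → ι → Ω → R}

theorem recursive_bound_failure_subset
    (hmem : ∀ t, 1 ≤ t → t < T → ∀ ω, πstar t ω ∈ P t ω)
    (hγ : ∀ t, 2 ≤ t → t ≤ T → ∀ ω, 0 ≤ γ t ω)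
    (hrec : ∀ t, 2 ≤ t → t ≤ T → ∀ ω, ∀ π ∈ P t ω,
      B t π ω = E t π ω + γ t ω * B (t - 1) (πstar (t - 1) ω) ω) :
    {ω | ∃ t, 1 ≤ t ∧ t ≤ T ∧ ∃ π ∈ P t ω, risk π ω ≥ B t π ω} ⊆
      {ω | ∃ π ∈ P 1 ω, risk π ω ≥ B 1 π ω} ∪
        ⋃ t ∈ Finset.Ioc 1 T,
          {ω | ∃ π ∈ P t ω, risk π ω - γ t ω * risk (πstar (t - 1) ω) ω ≥ E t π ω} := by
  rintro ω ⟨t, ht, htT, π, hπ, bound_le⟩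
  by_contra no_failure
  simp only [Set.mem_union, Set.mem_iUnion, Set.mem_ofPred_eq, Finset.mem_Ioc, not_or,
    not_exists, not_and, not_le, ge_iff_le, and_imp] at no_failure
  obtain ⟨base_holds, step_holds⟩ := no_failure
  exact bound_le.not_gt <|
    risk_lt_recursive_bound (fun s hs hsT => hmem s hs hsT ω) (fun s hs hsT => hγ s hs hsT ω)
      (risk := (risk · ω)) (B := (B · · ω)) (fun s hs hsT => hrec s hs hsT ω)
      base_holds step_holds ht htT π hπ

/-- Indexing everything by `ω` lets `ι` be a type of distributions with random classes `P t ω`, or a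
type of sample-dependent distributions `Ω → Measure H` with fixed classes. -/
theorem recursive_pac_bayes_bound_general [MeasurableSpace Ω] (μ : Measure Ω) (hT : 1 ≤ T)
    (hmem : ∀ t, 1 ≤ t → t < T → ∀ ω, πstar t ω ∈ P t ω)
    (hγ : ∀ t, 2 ≤ t → t ≤ T → ∀ ω, 0 ≤ γ t ω)
    (hrec : ∀ t, 2 ≤ t → t ≤ T → ∀ ω, ∀ π ∈ P t ω,
      B t π ω = E t π ω + γ t ω * B (t - 1) (πstar (t - 1) ω) ω)
    {δ : ℕ → ENNReal}
    (hbase : μ {ω | ∃ π ∈ P 1 ω, risk π ω ≥ B 1 π ω} ≤ δ 1)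
    (hstep : ∀ t, 2 ≤ t → t ≤ T →
      μ {ω | ∃ π ∈ P t ω, risk π ω - γ t ω * risk (πstar (t - 1) ω) ω ≥ E t π ω} ≤ δ t) :
    μ {ω | ∃ t, 1 ≤ t ∧ t ≤ T ∧ ∃ π ∈ P t ω, risk π ω ≥ B t π ω} ≤
      ∑ t ∈ Finset.Icc 1 T, δ t := by
  refine (measure_mono (recursive_bound_failure_subset hmem hγ hrec)).trans
    ((measure_union_le _ _).trans ?_)
  rw [← Finset.add_sum_Ioc_eq_sum_Icc hT]
  refine add_le_add hbase ((measure_biUnion_finset_le _ _).trans (Finset.sum_le_sum fun t ht => ?_))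
  obtain ⟨one_lt, le_T⟩ := Finset.mem_Ioc.mp ht
  exact hstep t one_lt le_T

end RecursiveBound

theorem sum_Icc_one_ofReal_div {T : ℕ} (hT : 1 ≤ T) (x : ℝ) :
    ∑ _t ∈ Finset.Icc 1 T, ENNReal.ofReal (x / T) = ENNReal.ofReal x := by
  have cast_ne_zero : (T : ℝ) ≠ 0 := by positivity
  rw [Finset.sum_const, Nat.card_Icc, Nat.add_sub_cancel, ← ENNReal.ofReal_nsmul, nsmul_eq_mul,
    mul_div_cancel₀ x cast_ne_zero]

/-- **Recursive Bound (Recursive PAC-Bayes shell).** Let `S = S_1 ∪ ⋯ ∪ S_T` be an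
i.i.d. sample of size `n` split into `T` non-overlapping subsamples (here `chunk`
assigns each sample point to a subsample, and `U^train_t = ∪_{s≤t} S_s` corresponds to
indices `i` with `chunk i < t`). Let `π_0*, …, π_T*` be distributions on `H` where
`π_t*` may depend on `U^train_t` only, let `γ_2, …, γ_T` be coefficients where `γ_t`
may depend on `U^train_{t-1}` only, and for each `t` let `Ps_t` be a set of
(sample-dependent) distributions on `H` depending on `U^train_t` only, with
`π_t* ∈ Ps_t`. Suppose `P[∃ π_1 ∈ Ps_1 : E_{π_1}[L(h)] ≥ B_1(π_1)] ≤ δ/T` and, for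
`t ≥ 2`, `P[∃ π_t ∈ Ps_t : E_{π_t}[L(h)] - γ_t E_{π_{t-1}*}[L(h')] ≥ E_t(π_t, γ_t)]
≤ δ/T`. Define recursively `B_t(π_t) = E_t(π_t, γ_t) + γ_t B_{t-1}(π_{t-1}*)`. Then
`P[∃ t ∈ {1,…,T}, ∃ π_t ∈ Ps_t : E_{π_t}[L(h)] ≥ B_t(π_t)] ≤ δ`. -/
theorem recursive_pac_bayes_bound
    {Ω 𝒵 H : Type*} [MeasurableSpace Ω] [MeasurableSpace 𝒵] [MeasurableSpace H]
    (μ : Measure Ω) [IsProbabilityMeasure μ]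
    (D : Measure 𝒵) [IsProbabilityMeasure D]
    (n : ℕ) (hn : 0 < n)
    (Z : Fin n → Ω → 𝒵) (hZmeas : ∀ i, Measurable (Z i))
    (hindep : iIndepFun Z μ)
    (hid : ∀ i, μ.map (Z i) = D)
    (ℓ : H → 𝒵 → ℝ) (hℓmeas : ∀ h, Measurable (ℓ h))
    (hℓint : ∀ h, Integrable (ℓ h) D)
    (T : ℕ) (hT : 1 ≤ T)
    (chunk : Fin n → Fin T)
    (πstar : ℕ → Ω → Measure H)
    (hπstarProb : ∀ t ≤ T, ∀ ω, IsProbabilityMeasure (πstar t ω))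
    -- `π_t*` depends on the data only through `U^train_t = ∪_{s ≤ t} S_s`
    (hπstarDep : ∀ t ≤ T, ∃ g : ({i : Fin n // (chunk i : ℕ) < t} → 𝒵) → Measure H,
      ∀ ω, πstar t ω = g fun i => Z i.1 ω)
    (γ : ℕ → Ω → ℝ)
    (hγRange : ∀ t, 2 ≤ t → t ≤ T → ∀ ω, γ t ω ∈ Set.Icc (0 : ℝ) 1)
    -- `γ_t` depends on the data only through `U^train_{t-1}`
    (hγDep : ∀ t, 2 ≤ t → t ≤ T →
      ∃ g : ({i : Fin n // (chunk i : ℕ) < t - 1} → 𝒵) → ℝ,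
      ∀ ω, γ t ω = g fun i => Z i.1 ω)
    (Ps : ℕ → Set (Ω → Measure H))
    (hPsProb : ∀ t, 1 ≤ t → t ≤ T → ∀ ρ ∈ Ps t, ∀ ω, IsProbabilityMeasure (ρ ω))
    -- members of `Ps_t` depend on the data only through `U^train_t`
    (hPsDep : ∀ t, 1 ≤ t → t ≤ T → ∀ ρ ∈ Ps t,
      ∃ g : ({i : Fin n // (chunk i : ℕ) < t} → 𝒵) → Measure H,
      ∀ ω, ρ ω = g fun i => Z i.1 ω)
    (hπstarMem : ∀ t, 1 ≤ t → t ≤ T → πstar t ∈ Ps t)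
    (δ : ℝ) (hδ : δ ∈ Set.Ioo (0 : ℝ) 1)
    (B1 : Measure H → Ω → ℝ) (Et : ℕ → Measure H → ℝ → Ω → ℝ)
    (hbase : μ {ω | ∃ ρ ∈ Ps 1, (∫ h, ∫ z, ℓ h z ∂D ∂(ρ ω)) ≥ B1 (ρ ω) ω} ≤
      ENNReal.ofReal (δ / T))
    (hstep : ∀ t, 2 ≤ t → t ≤ T →
      μ {ω | ∃ ρ ∈ Ps t,
          (∫ h, ∫ z, ℓ h z ∂D ∂(ρ ω))
            - γ t ω * (∫ h, ∫ z, ℓ h z ∂D ∂(πstar (t - 1) ω)) ≥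
          Et t (ρ ω) (γ t ω) ω} ≤ ENNReal.ofReal (δ / T))
    (B : ℕ → Measure H → Ω → ℝ)
    (hB1 : ∀ π ω, B 1 π ω = B1 π ω)
    (hBrec : ∀ t, 2 ≤ t → t ≤ T → ∀ π ω,
      B t π ω = Et t π (γ t ω) ω + γ t ω * B (t - 1) (πstar (t - 1) ω) ω) :
    μ {ω | ∃ t, 1 ≤ t ∧ t ≤ T ∧ ∃ ρ ∈ Ps t,
        (∫ h, ∫ z, ℓ h z ∂D ∂(ρ ω)) ≥ B t (ρ ω) ω} ≤ ENNReal.ofReal δ := by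
  rw [← sum_Icc_one_ofReal_div hT δ]
  exact recursive_pac_bayes_bound_general (P := fun t _ => Ps t) (πstar := fun t _ => πstar t)
    (risk := fun ρ ω => ∫ h, ∫ z, ℓ h z ∂D ∂(ρ ω)) (E := fun t ρ ω => Et t (ρ ω) (γ t ω) ω)
    (B := fun t ρ ω => B t (ρ ω) ω) μ hT (fun t ht htT _ => hπstarMem t ht htT.le)
    (fun t ht htT ω => (hγRange t ht htT ω).1) (fun t ht htT ω ρ _ => hBrec t ht htT (ρ ω) ω)
    (by simpa only [hB1] using hbase) hstep
end

section
/- Let Z be a real-valued random variable with Z ≤ 1 almost surely. Then for any λ ∈ [0, 1/2], E[exp(−λZ − λ²Z²)] ≤ exp(−λ E[Z]). -/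
open MeasureTheory

/-!
Pointwise, `exp (x - x²) ≤ 1 + x` for `-1/2 ≤ x`. Putting `x = -λZ` and taking expectations gives
`E[exp (-λZ - λ²Z²)] ≤ 1 - λ E[Z]`, and `1 + t ≤ exp t` finishes. The pointwise bound amounts to
`1 ≤ (1 + x) exp (x² - x)`: for `0 ≤ x` the linear lower bound of the exponential suffices, since
`(1 + x) (1 + (x² - x)) = 1 + x³`, while for `x ≤ 0` the quadratic one is needed.
-/

theorem one_le_one_add_mul_exp_sq_sub_of_nonneg {x : ℝ} (hx : 0 ≤ x) :
    1 ≤ (1 + x) * Real.exp (x ^ 2 - x) :=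
  calc
    1 ≤ 1 + x ^ 3 := le_add_of_nonneg_right (by positivity)
    _ = (1 + x) * (x ^ 2 - x + 1) := by ring
    _ ≤ (1 + x) * Real.exp (x ^ 2 - x) := by gcongr; exact Real.add_one_le_exp _

theorem one_le_one_add_mul_exp_sq_sub_of_nonpos {x : ℝ} (hx : -(1 / 2) ≤ x) (hx₀ : x ≤ 0) :
    1 ≤ (1 + x) * Real.exp (x ^ 2 - x) := by
  have one_add_nonneg : 0 ≤ 1 + x := by linarith
  have exponent_nonneg : 0 ≤ x ^ 2 - x := by nlinarith
  have cubic_nonneg : 0 ≤ 1 + x - x ^ 2 + x ^ 3 := by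
    have sq_le : x ^ 2 ≤ 1 / 4 := by nlinarith
    nlinarith
  calc
    1 ≤ 1 + x ^ 2 / 2 * (1 + x - x ^ 2 + x ^ 3) := le_add_of_nonneg_right (by positivity)
    _ = (1 + x) * (1 + (x ^ 2 - x) + (x ^ 2 - x) ^ 2 / 2) := by ring
    _ ≤ (1 + x) * Real.exp (x ^ 2 - x) := by
      gcongr
      exact Real.quadratic_le_exp_of_nonneg exponent_nonneg

theorem exp_sub_sq_le_one_add {x : ℝ} (hx : -(1 / 2) ≤ x) : Real.exp (x - x ^ 2) ≤ 1 + x := by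
  have one_le : 1 ≤ (1 + x) * Real.exp (x ^ 2 - x) :=
    (le_total 0 x).elim one_le_one_add_mul_exp_sq_sub_of_nonneg
      (one_le_one_add_mul_exp_sq_sub_of_nonpos hx)
  rwa [← neg_sub, Real.exp_neg, inv_le_iff_one_le_mul₀ (Real.exp_pos _)]

theorem unexpected_bernstein_mgf_general
    {Ω : Type*} [MeasurableSpace Ω] {μ : Measure Ω} [IsProbabilityMeasure μ]
    {X : Ω → ℝ} (hX : ∀ᵐ ω ∂μ, -(1 / 2) ≤ X ω) (hXint : Integrable X μ) :
    ∫ ω, Real.exp (X ω - X ω ^ 2) ∂μ ≤ Real.exp (∫ ω, X ω ∂μ) :=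
  calc
    ∫ ω, Real.exp (X ω - X ω ^ 2) ∂μ ≤ ∫ ω, (1 + X ω) ∂μ :=
      integral_mono_of_nonneg (ae_of_all μ fun _ ↦ (Real.exp_pos _).le)
        ((integrable_const 1).add hXint) (hX.mono fun _ ↦ exp_sub_sq_le_one_add)
    _ = ∫ ω, X ω ∂μ + 1 := by
      rw [integral_add (integrable_const 1) hXint, integral_const, probReal_univ, one_smul,
        add_comm]
    _ ≤ Real.exp (∫ ω, X ω ∂μ) := Real.add_one_le_exp _

/-- Let `Z ≤ 1` almost surely. Then for any `λ ∈ [0, 1/2]`,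
`E[exp(-λZ - λ²Z²)] ≤ exp(-λ E[Z])`. -/
theorem unexpected_bernstein_mgf
    {Ω : Type*} [MeasurableSpace Ω] (μ : Measure Ω) [IsProbabilityMeasure μ]
    (Z : Ω → ℝ) (hZmeas : Measurable Z) (hZle : ∀ᵐ ω ∂μ, Z ω ≤ 1)
    (lam : ℝ) (hlam : lam ∈ Set.Icc (0 : ℝ) (1/2))
    (hZint : Integrable Z μ)
    (hexpint : Integrable (fun ω => Real.exp (-lam * Z ω - lam ^ 2 * Z ω ^ 2)) μ) :
    ∫ ω, Real.exp (-lam * Z ω - lam ^ 2 * Z ω ^ 2) ∂μ ≤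
      Real.exp (-lam * ∫ ω, Z ω ∂μ) := by
  have neg_half_le : ∀ᵐ ω ∂μ, -(1 / 2) ≤ -lam * Z ω :=
    hZle.mono fun ω hω ↦ by nlinarith [hlam.1, hlam.2]
  simpa only [mul_pow, neg_sq, integral_const_mul] using
    unexpected_bernstein_mgf_general neg_half_le (hZint.const_mul (-lam))
end

section
/- Let Z be a real-valued random variable with Z ≤ 1 almost surely. Then for any λ ∈ [0, 1/2], E[exp(λ(E[Z] − Z) − λ²Z²)] ≤ 1. -/
open MeasureTheory

theorem one_le_one_sub_mul_exp_add_sq {y : ℝ} (hy : y ≤ 1 / 2) :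
    1 ≤ (1 - y) * Real.exp (y + y ^ 2) := by
  have one_sub_nonneg : 0 ≤ 1 - y := by linarith
  -- The first-order bound on `exp` leaves the remainder `-y ^ 3`, which is nonnegative only for
  -- `y ≤ 0`; for positive `y` the second-order term is needed.
  rcases le_total y 0 with hy_nonpos | hy_nonneg
  · have cube_nonpos : y ^ 3 ≤ 0 := Odd.pow_nonpos (by decide) hy_nonpos
    calc 1 ≤ 1 - y ^ 3 := by linarith
      _ = (1 - y) * (y + y ^ 2 + 1) := by ring
      _ ≤ (1 - y) * Real.exp (y + y ^ 2) := by gcongr; exact Real.add_one_le_exp _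
  · have sq_le : y ^ 2 ≤ (1 / 2) ^ 2 := by gcongr
    have cube_le : y ^ 3 ≤ (1 / 2) ^ 3 := by gcongr
    have remainder_nonneg : 0 ≤ y ^ 2 / 2 * (1 - y - y ^ 2 - y ^ 3) :=
      mul_nonneg (by positivity) (by linarith)
    calc 1 ≤ 1 + y ^ 2 / 2 * (1 - y - y ^ 2 - y ^ 3) := by linarith
      _ = (1 - y) * (1 + (y + y ^ 2) + (y + y ^ 2) ^ 2 / 2) := by ring
      _ ≤ (1 - y) * Real.exp (y + y ^ 2) := by
        gcongr
        exact Real.quadratic_le_exp_of_nonneg (by positivity)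

theorem exp_neg_sub_sq_le_one_sub {y : ℝ} (hy : y ≤ 1 / 2) :
    Real.exp (-y - y ^ 2) ≤ 1 - y := by
  rw [← neg_add', Real.exp_neg, inv_le_iff_one_le_mul₀ (Real.exp_pos _)]
  exact one_le_one_sub_mul_exp_add_sq hy

theorem integral_exp_neg_sub_sq_le_exp_neg_integral {Ω : Type*} [MeasurableSpace Ω]
    {μ : Measure Ω} [IsProbabilityMeasure μ] {X : Ω → ℝ} (hX : Integrable X μ)
    (hX_le : ∀ᵐ ω ∂μ, X ω ≤ 1 / 2) :
    ∫ ω, Real.exp (-X ω - X ω ^ 2) ∂μ ≤ Real.exp (-∫ ω, X ω ∂μ) :=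
  calc ∫ ω, Real.exp (-X ω - X ω ^ 2) ∂μ
      ≤ ∫ ω, (1 - X ω) ∂μ :=
        integral_mono_of_nonneg (ae_of_all μ fun _ => Real.exp_nonneg _)
          ((integrable_const 1).sub hX)
          (hX_le.mono fun _ => exp_neg_sub_sq_le_one_sub)
    _ = 1 - ∫ ω, X ω ∂μ := by
        rw [integral_sub (integrable_const 1) hX, integral_const, probReal_univ, one_smul]
    _ ≤ Real.exp (-∫ ω, X ω ∂μ) := Real.one_sub_le_exp_neg _

/-- Let `Z ≤ 1` almost surely. Then for any `λ ∈ [0, 1/2]`,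
`E[exp(λ(E[Z] - Z) - λ²Z²)] ≤ 1`. -/
theorem unexpected_bernstein_centered_mgf
    {Ω : Type*} [MeasurableSpace Ω] (μ : Measure Ω) [IsProbabilityMeasure μ]
    (Z : Ω → ℝ) (hZmeas : Measurable Z) (hZle : ∀ᵐ ω ∂μ, Z ω ≤ 1)
    (lam : ℝ) (hlam : lam ∈ Set.Icc (0 : ℝ) (1/2))
    (hZint : Integrable Z μ)
    (hexpint : Integrable
      (fun ω => Real.exp (lam * ((∫ ω', Z ω' ∂μ) - Z ω) - lam ^ 2 * Z ω ^ 2)) μ) :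
    ∫ ω, Real.exp (lam * ((∫ ω', Z ω' ∂μ) - Z ω) - lam ^ 2 * Z ω ^ 2) ∂μ ≤ 1 := by
  obtain ⟨lam_nonneg, lam_le⟩ := hlam
  have scaled_le : ∀ᵐ ω ∂μ, lam * Z ω ≤ 1 / 2 := by
    filter_upwards [hZle] with ω hω
    exact (mul_le_of_le_one_right lam_nonneg hω).trans lam_le
  have factor (m z : ℝ) : Real.exp (lam * (m - z) - lam ^ 2 * z ^ 2) =
      Real.exp (lam * m) * Real.exp (-(lam * z) - (lam * z) ^ 2) := by
    rw [← Real.exp_add]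
    ring_nf
  calc ∫ ω, Real.exp (lam * ((∫ ω', Z ω' ∂μ) - Z ω) - lam ^ 2 * Z ω ^ 2) ∂μ
      = Real.exp (lam * ∫ ω, Z ω ∂μ) *
          ∫ ω, Real.exp (-(lam * Z ω) - (lam * Z ω) ^ 2) ∂μ := by
        simp only [factor, integral_const_mul]
    _ ≤ Real.exp (lam * ∫ ω, Z ω ∂μ) * Real.exp (-∫ ω, lam * Z ω ∂μ) := by
        gcongr
        exact integral_exp_neg_sub_sq_le_exp_neg_integral (hZint.const_mul lam) scaled_le
    _ = 1 := by rw [integral_const_mul, ← Real.exp_add, add_neg_cancel, Real.exp_zero]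
end
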